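/- (Minimax lower bound for sparse mean estimation, Theorem 2 lower bound.) There is a universal constant c > 0 such that the following holds. Let s, p, m be positive integers with 2s ≤ p. For θ ∈ ℝ^p let P_θ^m denote the law of m i.i.d. samples from the product Gaussian ⊗_{j=1}^p N(θ_j, 1) on ℝ^p. Then for every measurable estimator T : (ℝ^p)^m → ℝ^p, sup over s-sparse θ ∈ ℝ^p of E_{P_θ^m}[‖T − θ‖₂²] ≥ c · s · log(p/s) / m. -/

import Mathlib

open MeasureTheory ProbabilityTheory
open scoped ENNReal

section DensityBounds

/-- `ν` has a density with respect to `μ` whose second moment under `μ` is at most `C`, that is,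
the chi-square divergence of `ν` from `μ` is at most `C - 1` when `ν` is a probability measure. -/
def HasSqDensityBound {Ω : Type*} [MeasurableSpace Ω] (ν μ : Measure Ω) (C : ℝ≥0∞) : Prop :=
  ∃ f : Ω → ℝ≥0∞, Measurable f ∧ ν = μ.withDensity f ∧ ∫⁻ x, f x ^ 2 ∂μ ≤ C

theorem HasSqDensityBound.sq_measure_le {Ω : Type*} [MeasurableSpace Ω] {ν μ : Measure Ω}
    {C : ℝ≥0∞} (h : HasSqDensityBound ν μ C) {A : Set Ω} (hA : MeasurableSet A) :
    ν A ^ 2 ≤ C * μ A := by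
  obtain ⟨f, hf, rfl, hC⟩ := h
  have holder := ENNReal.lintegral_mul_le_Lp_mul_Lq μ Real.HolderConjugate.two_two
    hf.aemeasurable (measurable_one.indicator hA :
      Measurable (A.indicator (1 : Ω → ℝ≥0∞))).aemeasurable
  have hl : (μ.withDensity f) A = ∫⁻ x, (f * A.indicator (1 : Ω → ℝ≥0∞)) x ∂μ := by
    rw [withDensity_apply _ hA, ← lintegral_indicator hA]
    refine lintegral_congr fun x => ?_
    by_cases hx : x ∈ A <;> simp [hx]
  have hr : ∫⁻ x, A.indicator (1 : Ω → ℝ≥0∞) x ^ (2 : ℝ) ∂μ = μ A := by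
    rw [← lintegral_indicator_one hA]
    refine lintegral_congr fun x => ?_
    by_cases hx : x ∈ A <;> simp [hx]
  have sq_rpow : ∀ a : ℝ≥0∞, (a ^ (1 / 2 : ℝ)) ^ 2 = a := fun a => by
    rw [← ENNReal.rpow_natCast, ← ENNReal.rpow_mul]; norm_num
  rw [← hl, hr] at holder
  simp only [ENNReal.rpow_ofNat] at holder
  calc (μ.withDensity f) A ^ 2
      ≤ ((∫⁻ x, f x ^ 2 ∂μ) ^ (1 / 2 : ℝ) * μ A ^ (1 / 2 : ℝ)) ^ 2 := by gcongr
    _ = (∫⁻ x, f x ^ 2 ∂μ) * μ A := by rw [mul_pow, sq_rpow, sq_rpow]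
    _ ≤ C * μ A := by gcongr

theorem lintegral_pi_prod_eq_prod_lintegral {ι : Type*} [Fintype ι] {E : ι → Type*}
    [∀ i, MeasurableSpace (E i)] (μ : ∀ i, Measure (E i)) [∀ i, IsProbabilityMeasure (μ i)]
    (f : ∀ i, E i → ℝ≥0∞) (hf : ∀ i, Measurable (f i)) :
    ∫⁻ x, ∏ i, f i (x i) ∂Measure.pi μ = ∏ i, ∫⁻ x, f i x ∂μ i := by
  rw [lintegral_prod_eq_prod_lintegral_of_indepFun Finset.univ
    (fun i (x : ∀ i, E i) => f i (x i))
    (iIndepFun_pi fun i => (hf i).aemeasurable) fun i => (hf i).comp (measurable_pi_apply i)]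
  refine Finset.prod_congr rfl fun i _ => ?_
  exact (measurePreserving_eval μ i).lintegral_comp (hf i)

theorem HasSqDensityBound.pi {ι : Type*} [Fintype ι] {E : ι → Type*}
    [∀ i, MeasurableSpace (E i)] {ν μ : ∀ i, Measure (E i)}
    [∀ i, IsProbabilityMeasure (μ i)] [∀ i, IsProbabilityMeasure (ν i)] {C : ι → ℝ≥0∞}
    (h : ∀ i, HasSqDensityBound (ν i) (μ i) (C i)) :
    HasSqDensityBound (Measure.pi ν) (Measure.pi μ) (∏ i, C i) := by
  choose f hf hν hC using h
  refine ⟨fun x => ∏ i, f i (x i), by fun_prop, ?_, ?_⟩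
  · refine Measure.pi_eq fun s hs => ?_
    rw [withDensity_apply _ (MeasurableSet.univ_pi hs),
      ← lintegral_indicator (MeasurableSet.univ_pi hs)]
    have hprod : ∀ x : ∀ i, E i, (Set.univ.pi s).indicator (fun x => ∏ i, f i (x i)) x =
        ∏ i, (s i).indicator (f i) (x i) := fun x => by
      by_cases hx : x ∈ Set.univ.pi s
      · rw [Set.indicator_of_mem hx]
        exact Finset.prod_congr rfl fun i _ => (Set.indicator_of_mem (hx i trivial) _).symm
      · obtain ⟨i, hi⟩ : ∃ i, x i ∉ s i := by simpa using hx
        rw [Set.indicator_of_notMem hx]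
        exact (Finset.prod_eq_zero (Finset.mem_univ i) (Set.indicator_of_notMem hi _)).symm
    simp_rw [hprod]
    rw [lintegral_pi_prod_eq_prod_lintegral μ _ fun i => (hf i).indicator (hs i)]
    refine Finset.prod_congr rfl fun i _ => ?_
    rw [hν i, withDensity_apply _ (hs i), lintegral_indicator (hs i)]
  · simp_rw [← Finset.prod_pow]
    rw [lintegral_pi_prod_eq_prod_lintegral μ _ fun i => (hf i).pow_const 2]
    exact Finset.prod_le_prod' fun i _ => hC i

theorem hasSqDensityBound_gaussianReal (a b : ℝ) :
    HasSqDensityBound (gaussianReal a 1) (gaussianReal b 1)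
      (ENNReal.ofReal (Real.exp ((a - b) ^ 2))) := by
  have hmeas : Measurable fun x : ℝ =>
      ENNReal.ofReal (Real.exp ((a - b) * x - (a ^ 2 - b ^ 2) / 2)) := by fun_prop
  refine ⟨_, hmeas, ?_, le_of_eq ?_⟩
  · rw [gaussianReal_of_var_ne_zero b one_ne_zero, gaussianReal_of_var_ne_zero a one_ne_zero,
      ← withDensity_mul _ (measurable_gaussianPDF b 1) hmeas]
    congr 1
    ext x
    rw [Pi.mul_apply, gaussianPDF, gaussianPDF, ← ENNReal.ofReal_mul (gaussianPDFReal_nonneg _ _ _),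
      gaussianPDFReal, gaussianPDFReal, mul_assoc (√_)⁻¹, ← Real.exp_add]
    congr 4
    push_cast
    ring
  · have hexp : ∀ x : ℝ, ENNReal.ofReal (Real.exp ((a - b) * x - (a ^ 2 - b ^ 2) / 2)) ^ 2 =
        ENNReal.ofReal (Real.exp (-(a ^ 2 - b ^ 2)) * Real.exp (2 * (a - b) * x)) := fun x => by
      rw [← ENNReal.ofReal_pow (Real.exp_nonneg _), ← Real.exp_nat_mul, ← Real.exp_add]
      congr 2
      push_cast
      ring
    simp_rw [hexp]
    rw [← ofReal_integral_eq_lintegral_ofReal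
      ((integrable_exp_mul_gaussianReal (2 * (a - b))).const_mul _)
      (Filter.Eventually.of_forall fun x => by positivity), integral_const_mul]
    have hmgf := congrFun (mgf_id_gaussianReal (μ := b) (v := 1)) (2 * (a - b))
    simp only [mgf, id] at hmgf
    rw [hmgf, ← Real.exp_add]
    congr 2
    push_cast
    ring

end DensityBounds

/-- The law of `m` i.i.d. samples from the Gaussian measure with mean `θ` and identity
covariance. -/
noncomputable abbrev gaussianSample (m : ℕ) {p : ℕ} (θ : Fin p → ℝ) :
    Measure (Fin m → Fin p → ℝ) :=
  Measure.pi fun _ : Fin m => Measure.pi fun j : Fin p => gaussianReal (θ j) 1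

theorem sq_gaussianSample_real_le (m : ℕ) {p : ℕ} (θ η : Fin p → ℝ)
    {A : Set (Fin m → Fin p → ℝ)} (hA : MeasurableSet A) :
    (gaussianSample m θ).real A ^ 2 ≤
      Real.exp (m * ∑ j, (θ j - η j) ^ 2) * (gaussianSample m η).real A := by
  have h := (HasSqDensityBound.pi fun _ : Fin m => HasSqDensityBound.pi fun j : Fin p =>
    hasSqDensityBound_gaussianReal (θ j) (η j)).sq_measure_le hA
  have hC : (∏ _i : Fin m, ∏ j, ENNReal.ofReal (Real.exp ((θ j - η j) ^ 2))) =
      ENNReal.ofReal (Real.exp (m * ∑ j, (θ j - η j) ^ 2)) := by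
    rw [← ENNReal.ofReal_prod_of_nonneg fun _ _ => Real.exp_nonneg _, ← Real.exp_sum]
    simp [← ENNReal.ofReal_pow (Real.exp_nonneg _), ← Real.exp_nat_mul]
  rw [hC] at h
  have := ENNReal.toReal_mono (by finiteness) h
  rwa [ENNReal.toReal_pow, ENNReal.toReal_mul, ENNReal.toReal_ofReal (Real.exp_nonneg _)] at this

section BlockPrior

variable {s k p : ℕ}

open Classical in
/-- The vector with value `a` at the position `f b` of every block `b` of `u`, and zero elsewhere,
where `e` lists the coordinates block by block. -/
noncomputable def blockVector (e : Fin s × Fin k ↪ Fin p) (a : ℝ) (u : Finset (Fin s))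
    (f : Fin s → Fin k) (j : Fin p) : ℝ :=
  if ∃ b ∈ u, e (b, f b) = j then a else 0

theorem card_support_blockVector_le (e : Fin s × Fin k ↪ Fin p) (a : ℝ) (u : Finset (Fin s))
    (f : Fin s → Fin k) : (Finset.univ.filter fun j => blockVector e a u f j ≠ 0).card ≤ s := by
  calc (Finset.univ.filter fun j => blockVector e a u f j ≠ 0).card
      ≤ (Finset.univ.image fun b => e (b, f b)).card := by
        refine Finset.card_le_card fun j hj => ?_
        simp only [Finset.mem_filter, blockVector, ne_eq, ite_eq_right_iff, not_forall] at hj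
        obtain ⟨-, ⟨b, -, hb⟩, -⟩ := hj
        simpa using ⟨b, hb⟩
    _ ≤ s := Finset.card_image_le.trans (by simp)

theorem blockVector_apply (e : Fin s × Fin k ↪ Fin p) (a : ℝ) (f : Fin s → Fin k) (b : Fin s)
    (i : Fin k) : blockVector e a Finset.univ f (e (b, i)) = if f b = i then a else 0 := by
  simp only [blockVector, Finset.mem_univ, true_and, e.injective.eq_iff, Prod.mk.injEq]
  congr 1
  simp

theorem sum_sq_blockVector_update_sub (e : Fin s × Fin k ↪ Fin p) (a : ℝ) (f : Fin s → Fin k)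
    (b : Fin s) (i : Fin k) :
    ∑ j, (blockVector e a Finset.univ (Function.update f b i) j -
      blockVector e a (Finset.univ.erase b) f j) ^ 2 = a ^ 2 := by
  rw [Finset.sum_eq_single (e (b, i))]
  · simp [blockVector]
  · intro j _ hj
    have : (∃ b' ∈ Finset.univ, e (b', Function.update f b i b') = j) ↔
        ∃ b' ∈ Finset.univ.erase b, e (b', f b') = j := by
      constructor
      · rintro ⟨b', -, h⟩
        have hb : b' ≠ b := by
          rintro rfl
          rw [Function.update_self] at h
          exact hj h.symm
        exact ⟨b', by simp [hb], by rwa [Function.update_of_ne hb] at h⟩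
      · rintro ⟨b', hb', h⟩
        exact ⟨b', by simp, by rwa [Function.update_of_ne (Finset.ne_of_mem_erase hb')]⟩
    simp only [blockVector, this, sub_self, ne_eq, OfNat.ofNat_ne_zero, not_false_eq_true, zero_pow]
  · simp

/-- The event that `T` is within `a / √2` of the one-spike vector `a eᵢ` on block `b`. -/
def closeEvent (e : Fin s × Fin k ↪ Fin p) (a : ℝ) {Ω : Type*} (T : Ω → Fin p → ℝ) (b : Fin s)
    (i : Fin k) : Set Ω :=
  {x | ∑ l, (T x (e (b, l)) - if i = l then a else 0) ^ 2 < a ^ 2 / 2}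

theorem measurableSet_closeEvent (e : Fin s × Fin k ↪ Fin p) (a : ℝ) {Ω : Type*}
    [MeasurableSpace Ω] {T : Ω → Fin p → ℝ} (hT : Measurable T) (b : Fin s) (i : Fin k) :
    MeasurableSet (closeEvent e a T b i) := by
  refine measurableSet_lt ?_ measurable_const
  fun_prop

theorem pairwise_disjoint_closeEvent (e : Fin s × Fin k ↪ Fin p) (a : ℝ) {Ω : Type*}
    (T : Ω → Fin p → ℝ) (b : Fin s) :
    Pairwise (Function.onFun Disjoint (closeEvent e a T b)) := by
  intro i i' hii
  refine Set.disjoint_left.2 fun x hx hx' => ?_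
  simp only [closeEvent, Set.mem_ofPred_eq] at hx hx'
  have hpair : ∀ t : Fin k → ℝ, (∑ l ∈ {i, i'}, t l ^ 2) ≤ ∑ l, t l ^ 2 := fun t =>
    Finset.sum_le_sum_of_subset_of_nonneg (Finset.subset_univ _) fun _ _ _ => sq_nonneg _
  have h₁ := hpair fun l => T x (e (b, l)) - if i = l then a else 0
  have h₂ := hpair fun l => T x (e (b, l)) - if i' = l then a else 0
  rw [Finset.sum_pair hii] at h₁ h₂
  simp only [if_true, if_neg hii, if_neg hii.symm] at h₁ h₂
  nlinarith [sq_nonneg (2 * T x (e (b, i)) - a), sq_nonneg (2 * T x (e (b, i')) - a)]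

theorem sum_gaussianSample_closeEvent_le (m : ℕ) (e : Fin s × Fin k ↪ Fin p) (a : ℝ)
    {T : (Fin m → Fin p → ℝ) → Fin p → ℝ} (hT : Measurable T) (f : Fin s → Fin k) (b : Fin s) :
    (∑ i, (gaussianSample m (blockVector e a Finset.univ (Function.update f b i))).real
      (closeEvent e a T b i)) ^ 2 ≤ k * Real.exp (m * a ^ 2) := by
  set η := blockVector e a (Finset.univ.erase b) f
  set P := fun i => gaussianSample m (blockVector e a Finset.univ (Function.update f b i))
  have hsum : ∑ i, (gaussianSample m η).real (closeEvent e a T b i) ≤ 1 := by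
    rw [← measureReal_iUnion_fintype (pairwise_disjoint_closeEvent e a T b)
      fun i => measurableSet_closeEvent e a hT b i]
    exact measureReal_le_one
  calc (∑ i, (P i).real (closeEvent e a T b i)) ^ 2
      ≤ k * ∑ i, (P i).real (closeEvent e a T b i) ^ 2 := by
        simpa using sq_sum_le_card_mul_sum_sq (s := Finset.univ)
          (f := fun i => (P i).real (closeEvent e a T b i))
    _ ≤ k * ∑ i, Real.exp (m * a ^ 2) * (gaussianSample m η).real (closeEvent e a T b i) := by
        gcongr with i
        rw [← sum_sq_blockVector_update_sub e a f b i]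
        exact sq_gaussianSample_real_le m _ η (measurableSet_closeEvent e a hT b i)
    _ ≤ k * Real.exp (m * a ^ 2) := by
        rw [← Finset.mul_sum]
        gcongr
        exact mul_le_of_le_one_right (Real.exp_nonneg _) hsum

theorem sum_sum_update {ι κ M : Type*} [Fintype ι] [DecidableEq ι] [Fintype κ]
    [AddCommMonoid M] (b : ι) (g : (ι → κ) → κ → M) :
    ∑ f : ι → κ, ∑ i, g (Function.update f b i) i = Fintype.card κ • ∑ f, g f (f b) := by
  have hinv : Function.Involutive fun q : (ι → κ) × κ => (Function.update q.1 b q.2, q.1 b) :=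
    fun q => by simp
  calc ∑ f : ι → κ, ∑ i, g (Function.update f b i) i
      = ∑ q : (ι → κ) × κ, g (Function.update q.1 b q.2) q.2 := by
        rw [Fintype.sum_prod_type]
    _ = ∑ q : (ι → κ) × κ, g q.1 (q.1 b) :=
        Fintype.sum_equiv hinv.toPerm _ _ fun q => by simp [Function.Involutive.toPerm]
    _ = Fintype.card κ • ∑ f, g f (f b) := by
        rw [Fintype.sum_prod_type, Finset.smul_sum]
        simp

theorem sum_missProb_le_risk (m : ℕ) (e : Fin s × Fin k ↪ Fin p) (a : ℝ)
    {T : (Fin m → Fin p → ℝ) → Fin p → ℝ} (hT : Measurable T) (f : Fin s → Fin k) :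
    ENNReal.ofReal (a ^ 2 / 2 * ∑ b, (1 - (gaussianSample m (blockVector e a Finset.univ f)).real
        (closeEvent e a T b (f b)))) ≤
      ∫⁻ x, ENNReal.ofReal (∑ j, (T x j - blockVector e a Finset.univ f j) ^ 2)
        ∂gaussianSample m (blockVector e a Finset.univ f) := by
  set θ := blockVector e a Finset.univ f with hθ
  set A := fun b => closeEvent e a T b (f b)
  have hA : ∀ b, MeasurableSet (A b) := fun b => measurableSet_closeEvent e a hT b (f b)
  have hpoint : ∀ x, ∑ b, (A b)ᶜ.indicator (fun _ => a ^ 2 / 2) x ≤ ∑ j, (T x j - θ j) ^ 2 := by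
    intro x
    calc ∑ b, (A b)ᶜ.indicator (fun _ => a ^ 2 / 2) x
        ≤ ∑ b, ∑ l, (T x (e (b, l)) - θ (e (b, l))) ^ 2 := by
          refine Finset.sum_le_sum fun b _ => ?_
          refine Set.indicator_apply_le' (fun hx => ?_) fun _ => by positivity
          simp only [hθ, blockVector_apply]
          exact not_lt.1 hx
      _ = ∑ j ∈ Finset.univ.map e, (T x j - θ j) ^ 2 := by
          rw [Finset.sum_map, Fintype.sum_prod_type]
      _ ≤ ∑ j, (T x j - θ j) ^ 2 :=
          Finset.sum_le_sum_of_subset_of_nonneg (Finset.subset_univ _) fun _ _ _ => sq_nonneg _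
  have hint : ∀ b, Integrable ((A b)ᶜ.indicator fun _ => a ^ 2 / 2) (gaussianSample m θ) :=
    fun b => (integrable_const _).indicator (hA b).compl
  calc ENNReal.ofReal (a ^ 2 / 2 * ∑ b, (1 - (gaussianSample m θ).real (A b)))
      = ENNReal.ofReal (∫ x, ∑ b, (A b)ᶜ.indicator (fun _ => a ^ 2 / 2) x ∂gaussianSample m θ) := by
        rw [integral_finsetSum _ fun b _ => hint b, Finset.mul_sum]
        congr 1
        refine Finset.sum_congr rfl fun b _ => ?_
        rw [integral_indicator_const _ (hA b).compl, probReal_compl_eq_one_sub (hA b), smul_eq_mul,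
          mul_comm]
    _ = ∫⁻ x, ENNReal.ofReal (∑ b, (A b)ᶜ.indicator (fun _ => a ^ 2 / 2) x) ∂gaussianSample m θ :=
        ofReal_integral_eq_lintegral_ofReal (integrable_finsetSum _ fun b _ => hint b)
          (Filter.Eventually.of_forall fun x => Finset.sum_nonneg fun b _ =>
            Set.indicator_nonneg (fun _ _ => by positivity) x)
    _ ≤ _ := lintegral_mono fun x => ENNReal.ofReal_le_ofReal (hpoint x)

theorem exists_risk_ge (m : ℕ) (e : Fin s × Fin k ↪ Fin p) (hk : 2 ≤ k) {a : ℝ}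
    (ha : Real.exp (m * a ^ 2) = √k) {T : (Fin m → Fin p → ℝ) → Fin p → ℝ} (hT : Measurable T) :
    ∃ f : Fin s → Fin k, ENNReal.ofReal (a ^ 2 * s / 16) ≤
      ∫⁻ x, ENNReal.ofReal (∑ j, (T x j - blockVector e a Finset.univ f j) ^ 2)
        ∂gaussianSample m (blockVector e a Finset.univ f) := by
  have : NeZero k := ⟨by omega⟩
  have hk2 : (2 : ℝ) ≤ k := by exact_mod_cast hk
  set q := fun (b : Fin s) (f : Fin s → Fin k) (i : Fin k) =>
    (gaussianSample m (blockVector e a Finset.univ f)).real (closeEvent e a T b i)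
  have hblock : ∀ b f, ∑ i, q b (Function.update f b i) i ≤ 7 / 8 * k := by
    intro b f
    refine abs_le_of_sq_le_sq' ?_ (by positivity) |>.2
    refine (sum_gaussianSample_closeEvent_le m e a hT f b).trans ?_
    rw [ha]
    have hsq : √(k : ℝ) ^ 2 = k := Real.sq_sqrt (by positivity)
    have hlow : 1.4 ≤ √(k : ℝ) := Real.le_sqrt_of_sq_le (by norm_num; linarith)
    nlinarith [mul_nonneg (by positivity : (0 : ℝ) ≤ k)
      (mul_nonneg (Real.sqrt_nonneg (k : ℝ)) (sub_nonneg.2 hlow)),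
      mul_nonneg (by positivity : (0 : ℝ) ≤ k) (Real.sqrt_nonneg (k : ℝ))]
  have havg : ∀ b, ∑ f, q b f (f b) ≤ ∑ _f : Fin s → Fin k, (7 / 8 : ℝ) := by
    intro b
    have h := Finset.sum_le_sum fun f (_ : f ∈ Finset.univ) => hblock b f
    rw [sum_sum_update b (q b), ← Finset.sum_mul, Fintype.card_fin, nsmul_eq_mul, mul_comm] at h
    exact le_of_mul_le_mul_right h (by positivity)
  have htotal : ∑ _f : Fin s → Fin k, (s / 8 : ℝ) ≤ ∑ f, ∑ b, (1 - q b f (f b)) := by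
    rw [Finset.sum_comm]
    calc ∑ _f : Fin s → Fin k, (s / 8 : ℝ) = ∑ b : Fin s, ∑ _f : Fin s → Fin k, (1 / 8 : ℝ) := by
          simp; ring
      _ ≤ _ := Finset.sum_le_sum fun b _ => by
          have := havg b
          rw [Finset.sum_sub_distrib]
          simp only [Finset.sum_const, nsmul_eq_mul] at this ⊢
          linarith
  obtain ⟨f, -, hf⟩ := Finset.exists_le_of_sum_le Finset.univ_nonempty htotal
  refine ⟨f, le_trans (ENNReal.ofReal_le_ofReal ?_) (sum_missProb_le_risk m e a hT f)⟩
  calc a ^ 2 * s / 16 = a ^ 2 / 2 * (s / 8) := by ring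
    _ ≤ _ := by gcongr

end BlockPrior

open scoped ENNReal

/-- minimax lower bound for sparse Gaussian mean estimation: there is a
universal constant `c > 0` such that for all positive integers `s, p, m` with `2s ≤ p` and
every measurable estimator `T : (ℝ^p)^m → ℝ^p`, the supremum over `s`-sparse `θ ∈ ℝ^p` of the
risk `E_{P_θ^m}[‖T − θ‖₂²]` is at least `c · s · log(p/s) / m`, where `P_θ^m` is the law of
`m` i.i.d. samples from `⊗_j N(θ_j, 1)`. -/
theorem sparse_mean_minimax_lower_bound :
    ∃ c > (0 : ℝ), ∀ s p m : ℕ, 0 < s → 0 < p → 0 < m → 2 * s ≤ p →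
      ∀ T : (Fin m → Fin p → ℝ) → Fin p → ℝ, Measurable T →
        ENNReal.ofReal (c * s * Real.log ((p : ℝ) / s) / m) ≤
          ⨆ θ ∈ {θ : Fin p → ℝ | (Finset.univ.filter fun j => θ j ≠ 0).card ≤ s},
            ∫⁻ x, ENNReal.ofReal (∑ j, (T x j - θ j) ^ 2)
              ∂(Measure.pi fun _ : Fin m => Measure.pi fun j : Fin p => gaussianReal (θ j) 1) := by
  refine ⟨1 / 64, by norm_num, fun s p m hs _ hm hsp T hT => ?_⟩
  set k := p / s
  have hk : 2 ≤ k := (Nat.le_div_iff_mul_le hs).2 hsp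
  have hk2 : (2 : ℝ) ≤ k := by exact_mod_cast hk
  have hs' : (0 : ℝ) < s := by exact_mod_cast hs
  have hm' : (0 : ℝ) < m := by exact_mod_cast hm
  have hlogk : 0 ≤ Real.log k := Real.log_nonneg (by linarith)
  obtain ⟨e⟩ : Nonempty (Fin s × Fin k ↪ Fin p) :=
    Function.Embedding.nonempty_of_card_le (by simpa using Nat.mul_div_le p s)
  have hlog : Real.log ((p : ℝ) / s) ≤ 2 * Real.log k := by
    have hp : (p : ℝ) / s ≤ (k : ℝ) ^ 2 := by
      have h : (p : ℝ) < s * (k + 1) := by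
        exact_mod_cast Nat.lt_mul_div_succ p hs
      rw [div_le_iff₀ hs']
      nlinarith
    have hpos : (0 : ℝ) < (p : ℝ) / s := div_pos (by exact_mod_cast (by omega : 0 < p)) hs'
    calc Real.log ((p : ℝ) / s) ≤ Real.log ((k : ℝ) ^ 2) := Real.log_le_log hpos hp
      _ = 2 * Real.log k := by rw [Real.log_pow]; norm_num
  set a := √(Real.log k / (2 * m))
  have ha2 : a ^ 2 = Real.log k / (2 * m) := Real.sq_sqrt (by positivity)
  have ha : Real.exp (m * a ^ 2) = √k := by
    rw [ha2, show (m : ℝ) * (Real.log k / (2 * m)) = Real.log k / 2 by field_simp,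
      Real.exp_half, Real.exp_log (by linarith)]
  obtain ⟨f, hf⟩ := exists_risk_ge m e hk ha hT
  refine le_trans (ENNReal.ofReal_le_ofReal ?_) (hf.trans (le_iSup₂_of_le
    (blockVector e a Finset.univ f) (card_support_blockVector_le e a _ f) le_rfl))
  rw [ha2]
  calc 1 / 64 * s * Real.log ((p : ℝ) / s) / m ≤ 1 / 64 * s * (2 * Real.log k) / m := by gcongr
    _ = Real.log k / (2 * m) * s / 16 := by ring
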